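/- arXiv:1009.5092 — 10 statements merged into one kernel-verified Lean document; each statement's English description precedes it below -/
import Mathlib

section
/- Let G : ℤ → ℚ satisfy G_{n+2} = A·G_{n+1} + B·G_n for all n ∈ ℤ with B ≠ 0, and let G' : ℤ → ℚ satisfy G'_{n+2} = A'·G'_{n+1} + B'·G'_n for all n ∈ ℤ with B' ≠ 0. Assume G_1² ≠ A·G_1·G_0 + B·G_0² and G'_1² ≠ A'·G'_1·G'_0 + B'·G'_0² (i.e. neither sequence is of the form n ↦ g·μⁿ). Then there exists k ∈ ℤ with G'_n = G_{n+k} for all n ∈ ℤ if and only if G and G' share four equal consecutive terms, i.e. there exist r, s ∈ ℤ with G'_{r+i} = G_{s+i} for i = 0, 1, 2, 3. -/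
/-!
The Hankel determinant `G n * G (n + 2) - G (n + 1) ^ 2` is multiplied by `-B` when `n` increases
by one, and at `n = 0` it is nonzero exactly when `G` is not geometric. Since `G` extends
indefinitely to the left, a single nonzero Hankel determinant forces `B ≠ 0` and hence makes all of
them nonzero. Four consecutive terms give two linear equations for the parameters `A`, `B` whose
determinant is a Hankel determinant, so they determine the parameters; the parameters together with
two consecutive terms determine the whole sequence, as `B ≠ 0` lets the recurrence run backwards.
-/

/-- The extended binary recurrence sequences with parameters `A` and `B`, over any coefficients for
which the recurrence makes sense; `B ≠ 0` is not part of the definition. -/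
def IsBinaryRecurrence {R : Type*} [Mul R] [Add R] (A B : R) (G : ℤ → R) : Prop :=
  ∀ n : ℤ, G (n + 2) = A * G (n + 1) + B * G n

/-- The determinant of the Hankel matrix `!![G n, G (n + 1); G (n + 1), G (n + 2)]`, which detects
whether a binary recurrence sequence is geometric without reference to its parameters. -/
def hankelDet {R : Type*} [Ring R] (G : ℤ → R) (n : ℤ) : R :=
  G n * G (n + 2) - G (n + 1) ^ 2

theorem hankelDet_comp_add_right {R : Type*} [Ring R] (G : ℤ → R) (k n : ℤ) :
    hankelDet (fun m ↦ G (m + k)) n = hankelDet G (n + k) := by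
  simp only [hankelDet, add_right_comm]

namespace IsBinaryRecurrence

section Shift

variable {R : Type*} [Mul R] [Add R] {A B : R} {G : ℤ → R}

theorem apply_add_three (hG : IsBinaryRecurrence A B G) (n : ℤ) :
    G (n + 3) = A * G (n + 2) + B * G (n + 1) := by
  convert hG (n + 1) using 2 <;> ring_nf

theorem comp_add_right (hG : IsBinaryRecurrence A B G) (k : ℤ) :
    IsBinaryRecurrence A B fun n ↦ G (n + k) := by
  intro n
  simpa only [add_right_comm] using hG (n + k)

end Shift

variable {R : Type*} [CommRing R] {A B A' B' : R} {G G' : ℤ → R}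

theorem hankelDet_zero (hG : IsBinaryRecurrence A B G) :
    hankelDet G 0 = A * G 1 * G 0 + B * G 0 ^ 2 - G 1 ^ 2 := by
  have h2 : G 2 = A * G 1 + B * G 0 := hG 0
  simp only [hankelDet, zero_add, h2]
  ring

theorem hankelDet_add_one (hG : IsBinaryRecurrence A B G) (n : ℤ) :
    hankelDet G (n + 1) = -B * hankelDet G n := by
  have h2 := hG n
  have h3 := hG.apply_add_three n
  simp only [hankelDet, add_assoc, Int.reduceAdd]
  linear_combination G (n + 1) * h3 - G (n + 2) * h2

theorem ne_zero_of_hankelDet_ne_zero (hG : IsBinaryRecurrence A B G) {n : ℤ}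
    (hn : hankelDet G n ≠ 0) : B ≠ 0 := by
  rintro rfl
  have h := hG.hankelDet_add_one (n - 1)
  rw [sub_add_cancel, neg_zero, zero_mul] at h
  exact hn h

variable [NoZeroDivisors R]

theorem hankelDet_ne_zero (hG : IsBinaryRecurrence A B G) {m : ℤ} (hm : hankelDet G m ≠ 0)
    (n : ℤ) : hankelDet G n ≠ 0 := by
  have hB : -B ≠ 0 := neg_ne_zero.mpr (hG.ne_zero_of_hankelDet_ne_zero hm)
  have succ_iff (k : ℤ) : hankelDet G (k + 1) ≠ 0 ↔ hankelDet G k ≠ 0 := by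
    rw [hG.hankelDet_add_one, mul_ne_zero_iff_left hB]
  induction n using Int.inductionOn' (b := m) with
  | zero => exact hm
  | succ k _ ih => exact (succ_iff k).mpr ih
  | pred k _ ih => exact (succ_iff (k - 1)).mp (by rwa [sub_add_cancel])

theorem eq_of_two_consecutive_eq (hG : IsBinaryRecurrence A B G)
    (hG' : IsBinaryRecurrence A B G') (hB : B ≠ 0) {r : ℤ}
    (h0 : G' r = G r) (h1 : G' (r + 1) = G (r + 1)) : G' = G := by
  suffices h : ∀ n, G' n = G n ∧ G' (n + 1) = G (n + 1) from funext fun n ↦ (h n).1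
  intro n
  induction n using Int.inductionOn' (b := r) with
  | zero => exact ⟨h0, h1⟩
  | succ k _ ih =>
    refine ⟨ih.2, ?_⟩
    rw [add_assoc, one_add_one_eq_two, hG', hG, ih.1, ih.2]
  | pred k _ ih =>
    have backward {F : ℤ → R} (hF : IsBinaryRecurrence A B F) :
        B * F (k - 1) = F (k + 1) - A * F k := by
      have h := hF (k - 1)
      rw [show k - 1 + 2 = k + 1 by ring, sub_add_cancel] at h
      linear_combination -h
    refine ⟨mul_left_cancel₀ hB ?_, by rw [sub_add_cancel]; exact ih.1⟩
    rw [backward hG', backward hG, ih.1, ih.2]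

theorem parameters_eq_of_four_consecutive_eq (hG : IsBinaryRecurrence A B G)
    (hG' : IsBinaryRecurrence A' B' G') {r : ℤ} (hr : hankelDet G r ≠ 0)
    (h0 : G' r = G r) (h1 : G' (r + 1) = G (r + 1))
    (h2 : G' (r + 2) = G (r + 2)) (h3 : G' (r + 3) = G (r + 3)) :
    A' = A ∧ B' = B := by
  have eqn2 : A' * G (r + 1) + B' * G r = A * G (r + 1) + B * G r := by
    rw [← hG r, ← h2, hG' r, h1, h0]
  have eqn3 : A' * G (r + 2) + B' * G (r + 1) = A * G (r + 2) + B * G (r + 1) := by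
    rw [← hG.apply_add_three r, ← h3, hG'.apply_add_three r, h2, h1]
  -- Cramer's rule
  constructor <;> apply mul_right_cancel₀ hr <;> unfold hankelDet
  · linear_combination G r * eqn3 - G (r + 1) * eqn2
  · linear_combination G (r + 2) * eqn2 - G (r + 1) * eqn3

theorem eq_of_four_consecutive_eq (hG : IsBinaryRecurrence A B G)
    (hG' : IsBinaryRecurrence A' B' G') {r : ℤ} (hr : hankelDet G r ≠ 0)
    (h0 : G' r = G r) (h1 : G' (r + 1) = G (r + 1))
    (h2 : G' (r + 2) = G (r + 2)) (h3 : G' (r + 3) = G (r + 3)) :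
    G' = G := by
  obtain ⟨rfl, rfl⟩ := hG.parameters_eq_of_four_consecutive_eq hG' hr h0 h1 h2 h3
  exact hG.eq_of_two_consecutive_eq hG' (hG.ne_zero_of_hankelDet_ne_zero hr) h0 h1

end IsBinaryRecurrence

theorem shift_equivalent_iff_four_consecutive_terms_general
    {R : Type*} [CommRing R] [NoZeroDivisors R] {A B A' B' : R} {G G' : ℤ → R}
    (hG : IsBinaryRecurrence A B G) (hG' : IsBinaryRecurrence A' B' G')
    (hgeo : G 1 ^ 2 ≠ A * G 1 * G 0 + B * G 0 ^ 2) :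
    (∃ k : ℤ, ∀ n : ℤ, G' n = G (n + k)) ↔
      (∃ r s : ℤ, G' r = G s ∧ G' (r + 1) = G (s + 1) ∧
        G' (r + 2) = G (s + 2) ∧ G' (r + 3) = G (s + 3)) := by
  constructor
  · rintro ⟨k, hk⟩
    exact ⟨0, k, by simp only [hk, zero_add, add_comm k, and_self]⟩
  · rintro ⟨r, s, h⟩
    obtain ⟨k, rfl⟩ : ∃ k, s = r + k := ⟨s - r, by ring⟩
    simp only [add_right_comm r k] at h
    obtain ⟨h0, h1, h2, h3⟩ := h
    have hdet0 : hankelDet G 0 ≠ 0 := by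
      rw [hG.hankelDet_zero]
      exact sub_ne_zero.mpr hgeo.symm
    have hdet : hankelDet (fun n ↦ G (n + k)) r ≠ 0 := by
      rw [hankelDet_comp_add_right]
      exact hG.hankelDet_ne_zero hdet0 (r + k)
    exact ⟨k, congrFun ((hG.comp_add_right k).eq_of_four_consecutive_eq hG' hdet h0 h1 h2 h3)⟩

/-- Two extended binary recurrence sequences (with possibly different parameters),
neither of which is geometric, are shift-equivalent if and only if they share four
equal consecutive terms. -/
theorem shift_equivalent_iff_four_consecutive_terms
    (A B A' B' : ℚ) (hB : B ≠ 0) (hB' : B' ≠ 0) (G G' : ℤ → ℚ)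
    (hG : ∀ n : ℤ, G (n + 2) = A * G (n + 1) + B * G n)
    (hG' : ∀ n : ℤ, G' (n + 2) = A' * G' (n + 1) + B' * G' n)
    (hgeo : (G 1) ^ 2 ≠ A * G 1 * G 0 + B * (G 0) ^ 2)
    (hgeo' : (G' 1) ^ 2 ≠ A' * G' 1 * G' 0 + B' * (G' 0) ^ 2) :
    (∃ k : ℤ, ∀ n : ℤ, G' n = G (n + k)) ↔
      (∃ r s : ℤ, G' r = G s ∧ G' (r + 1) = G (s + 1) ∧
        G' (r + 2) = G (s + 2) ∧ G' (r + 3) = G (s + 3)) :=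
  shift_equivalent_iff_four_consecutive_terms_general hG hG' hgeo
end

section
/- Let ℓ be an odd prime and let A, B, u, v be integers with ℓ not dividing B, and let G be the binary recurrence sequence with these data. Let Δ = A² + 4B be the discriminant. If ℓ does not divide Δ and Δ is a nonzero square modulo ℓ (i.e. there is an integer c with c² ≡ Δ (mod ℓ)), then the least positive integer k such that G_{n+k} ≡ G_n (mod ℓ) for all n ≥ 0 divides ℓ - 1. -/
/-!
When the discriminant is a nonzero square in a finite field `K` with `q` elements, the
characteristic polynomial has two distinct roots `a, b ∈ K`, so `G n` is a linear combination of
`a ^ n` and `b ^ n`. Since `x ^ q = x` in `K`, the number `q - 1` is a period of `G` from index `1`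
on. Shifting by a multiple of the least period of `G` carries this over to all indices, and the
least period divides every period.
-/

section Periodic

variable {α : Type*} {f : ℕ → α} {p k : ℕ}

theorem periodic_of_periodic_of_forall_ge (hp : 0 < p) (hf : Function.Periodic f p) {N : ℕ}
    (hk : ∀ n ≥ N, f (n + k) = f n) : Function.Periodic f k := by
  intro n
  have hshift : ∀ m, f (m + N * p) = f m := hf.nat_mul N
  have hN : N ≤ n + N * p := le_add_left (Nat.le_mul_of_pos_right N hp)
  calc f (n + k) = f (n + k + N * p) := (hshift _).symm
    _ = f (n + N * p + k) := by rw [add_right_comm]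
    _ = f (n + N * p) := hk _ hN
    _ = f n := hshift n

theorem dvd_of_isLeast_period (hp : IsLeast {j | 0 < j ∧ Function.Periodic f j} p)
    (hk : Function.Periodic f k) : p ∣ k := by
  obtain ⟨⟨hpos, hper⟩, hmin⟩ := hp
  have hmod : Function.Periodic f (k % p) := fun n ↦
    calc f (n + k % p) = f (n + k % p + k / p * p) := (hper.nat_mul (k / p) _).symm
      _ = f (n + k) := by rw [add_assoc, Nat.mod_add_div']
      _ = f n := hk n
  by_contra hndvd
  have hle : p ≤ k % p := hmin ⟨Nat.pos_of_ne_zero (mt Nat.dvd_of_mod_eq_zero hndvd), hmod⟩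
  exact (Nat.mod_lt k hpos).not_ge hle

end Periodic

section ClosedForm

variable {R : Type*} [CommRing R] {A B a b : R} {G : ℕ → R}

theorem recurrence_sub_root_mul (hadd : a + b = A) (hmul : a * b = -B)
    (hG : ∀ n, G (n + 2) = A * G (n + 1) + B * G n) (n : ℕ) :
    G (n + 1) - b * G n = a ^ n * (G 1 - b * G 0) := by
  induction n with
  | zero => simp
  | succ n ih => linear_combination hG n + a * ih - G (n + 1) * hadd + G n * hmul

theorem root_sub_root_mul_recurrence (hadd : a + b = A) (hmul : a * b = -B)
    (hG : ∀ n, G (n + 2) = A * G (n + 1) + B * G n) (n : ℕ) :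
    (a - b) * G n = a ^ n * (G 1 - b * G 0) - b ^ n * (G 1 - a * G 0) := by
  have hpow_a := recurrence_sub_root_mul hadd hmul hG n
  have hpow_b := recurrence_sub_root_mul (add_comm b a ▸ hadd) (mul_comm b a ▸ hmul) hG n
  linear_combination hpow_a - hpow_b

end ClosedForm

theorem exists_ne_add_eq_mul_eq_of_isSquare {K : Type*} [Field K] (h2 : (2 : K) ≠ 0) {A B : K}
    (hΔ : A ^ 2 + 4 * B ≠ 0) (hsq : IsSquare (A ^ 2 + 4 * B)) :
    ∃ a b : K, a ≠ b ∧ a + b = A ∧ a * b = -B := by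
  obtain ⟨c, hc⟩ := hsq
  have hc0 : c ≠ 0 := by
    rintro rfl
    exact hΔ (by simpa using hc)
  refine ⟨(A + c) / 2, (A - c) / 2, sub_ne_zero.mp ?_, by field_simp; ring, ?_⟩
  · rwa [show (A + c) / 2 - (A - c) / 2 = c by field_simp; ring]
  · field_simp
    linear_combination hc

section FiniteField

variable {K : Type*} [Field K] [Fintype K]

theorem pow_add_card_sub_one (x : K) {n : ℕ} (hn : 1 ≤ n) :
    x ^ (n + (Fintype.card K - 1)) = x ^ n := by
  have hcard : 0 < Fintype.card K := Fintype.card_pos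
  calc x ^ (n + (Fintype.card K - 1)) = x ^ (n - 1 + Fintype.card K) := by congr 1; omega
    _ = x ^ n := by rw [pow_add, FiniteField.pow_card, ← pow_succ, Nat.sub_add_cancel hn]

theorem recurrence_add_card_sub_one {A B a b : K} (hab : a ≠ b) (hadd : a + b = A)
    (hmul : a * b = -B) {G : ℕ → K} (hG : ∀ n, G (n + 2) = A * G (n + 1) + B * G n) {n : ℕ}
    (hn : 1 ≤ n) : G (n + (Fintype.card K - 1)) = G n := by
  apply mul_left_cancel₀ (sub_ne_zero.mpr hab)
  rw [root_sub_root_mul_recurrence hadd hmul hG, root_sub_root_mul_recurrence hadd hmul hG,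
    pow_add_card_sub_one a hn, pow_add_card_sub_one b hn]

theorem period_dvd_of_discriminant_square_general (hK : ringChar K ≠ 2) {A B : K} {G : ℕ → K}
    (hG : ∀ n, G (n + 2) = A * G (n + 1) + B * G n) (hΔ : A ^ 2 + 4 * B ≠ 0)
    (hsq : IsSquare (A ^ 2 + 4 * B)) {p : ℕ}
    (hp : IsLeast {k | 0 < k ∧ Function.Periodic G k} p) : p ∣ Fintype.card K - 1 := by
  obtain ⟨a, b, hab, hadd, hmul⟩ :=
    exists_ne_add_eq_mul_eq_of_isSquare (Ring.two_ne_zero hK) hΔ hsq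
  obtain ⟨hpos, hper⟩ := hp.1
  exact dvd_of_isLeast_period hp <| periodic_of_periodic_of_forall_ge hpos hper
    fun _ ↦ recurrence_add_card_sub_one hab hadd hmul hG

end FiniteField

/-- If an odd prime `ℓ` divides neither `B` nor the discriminant `Δ = A² + 4B`, and `Δ`
is a (nonzero) square modulo `ℓ`, then the minimal period of the binary recurrence
sequence modulo `ℓ` divides `ℓ - 1`. -/
theorem period_dvd_of_discriminant_square
    (ℓ : ℕ) (hℓ : Nat.Prime ℓ) (hodd : Odd ℓ) (A B u v : ℤ) (hB : ¬ (ℓ : ℤ) ∣ B)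
    (G : ℕ → ℤ) (hG0 : G 0 = u) (hG1 : G 1 = v)
    (hGrec : ∀ n : ℕ, G (n + 2) = A * G (n + 1) + B * G n)
    (hΔ : ¬ (ℓ : ℤ) ∣ (A ^ 2 + 4 * B))
    (hsq : ∃ c : ℤ, c ^ 2 ≡ A ^ 2 + 4 * B [ZMOD (ℓ : ℤ)])
    (π : ℕ)
    (hπ : IsLeast {k : ℕ | 0 < k ∧ ∀ n : ℕ, G (n + k) ≡ G n [ZMOD (ℓ : ℤ)]} π) :
    π ∣ ℓ - 1 := by
  have : Fact ℓ.Prime := ⟨hℓ⟩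
  have hchar : ringChar (ZMod ℓ) ≠ 2 := by
    rw [ZMod.ringChar_zmod_n]
    exact hodd.ne_two_of_dvd_nat dvd_rfl
  obtain ⟨c, hc⟩ := hsq
  simp only [← ZMod.intCast_eq_intCast_iff] at hc hπ
  rw [← ZMod.intCast_zmod_eq_zero_iff_dvd] at hΔ
  push_cast at hc hΔ
  rw [← ZMod.card ℓ]
  exact period_dvd_of_discriminant_square_general (G := fun n ↦ (G n : ZMod ℓ)) hchar
    (fun n ↦ by simp [hGrec n]) hΔ ⟨c, by rw [← hc, sq]⟩ hπ
end

section
/- Let ℓ be an odd prime and let A, B, u, v be integers with ℓ not dividing B, and let G be the binary recurrence sequence with these data. Let Δ = A² + 4B be the discriminant. If Δ is not a square modulo ℓ (i.e. there is no integer c with c² ≡ Δ (mod ℓ)), then the least positive integer k such that G_{n+k} ≡ G_n (mod ℓ) for all n ≥ 0 divides ℓ² - 1. -/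
/-!
The shift operator on sequences turns the recurrence into the statement that `X² - AX - B`,
evaluated at the shift, kills `G`; hence `G` has period `N` as soon as `X² - AX - B` divides
`X ^ N - 1`. Over a field with `q` elements the latter holds for `N = q² - 1`: a nonzero
discriminant makes the quadratic squarefree, each of its irreducible factors has degree `1` or `2`
and so divides `X ^ q² - X`, and `B ≠ 0` makes it coprime to `X`.
-/

open Polynomial UniqueFactorizationMonoid

section Shift

variable (R M : Type*) [Semiring R] [AddCommMonoid M] [Module R M]

/-- The left shift `f ↦ (n ↦ f (n + 1))` as a linear endomorphism of the space of sequences, so that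
a linear recurrence with constant coefficients says that a polynomial in the shift kills `f`. -/
def shift : Module.End R (ℕ → M) :=
  LinearMap.funLeft R M (· + 1)

variable {M}

theorem shift_pow_apply (k : ℕ) (f : ℕ → M) (n : ℕ) : (shift R M ^ k) f n = f (n + k) := by
  induction k generalizing n with
  | zero => rfl
  | succ k ih =>
    calc (shift R M ^ (k + 1)) f n = (shift R M ^ k) f (n + 1) := by rw [pow_succ']; rfl
      _ = f (n + (k + 1)) := by rw [ih, add_assoc, add_comm 1]

end Shift

theorem periodic_of_aeval_shift_eq_zero {R M : Type*} [CommRing R] [AddCommGroup M] [Module R M]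
    {P : R[X]} {N : ℕ} (hP : P ∣ X ^ N - 1) {f : ℕ → M}
    (hf : aeval (shift R M) P f = 0) : Function.Periodic f N := by
  obtain ⟨Q, hQ⟩ := hP
  have hzero : aeval (shift R M) (X ^ N - 1 : R[X]) f = 0 := by
    rw [hQ, mul_comm, aeval_mul, Module.End.mul_apply, hf, map_zero]
  intro n
  simpa [shift_pow_apply, sub_eq_zero] using congrFun hzero n

theorem dvd_of_squarefree_of_forall_irreducible_dvd {M : Type*} [CommMonoidWithZero M]
    [UniqueFactorizationMonoid M] {a b : M} (ha : Squarefree a)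
    (h : ∀ p, Irreducible p → p ∣ a → p ∣ b) : a ∣ b := by
  let : StrongNormalizationMonoid M := UniqueFactorizationMonoid.strongNormalizationMonoid
  rcases subsingleton_or_nontrivial M with _ | _
  · exact (Subsingleton.elim a b).dvd
  calc a ∣ radical a := ha.isRadical.dvd_radical ha.ne_zero
    _ ∣ b := Finset.prod_dvd_of_isRelPrime pairwise_primeFactors_isRelPrime fun p hp ↦
      have hp := mem_primeFactors.1 hp
      h p (irreducible_of_normalized_factor p hp) (dvd_of_mem_normalizedFactors hp)

theorem dvd_X_pow_card_pow_sub_one {F : Type*} [Field F] [Finite F] {P : F[X]} {m : ℕ}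
    (hP : Squarefree P) (hP0 : P.coeff 0 ≠ 0)
    (hdeg : ∀ p, Irreducible p → p ∣ P → p.natDegree ∣ m) : P ∣ X ^ (Nat.card F ^ m - 1) - 1 := by
  have hdvd : P ∣ X ^ Nat.card F ^ m - X :=
    dvd_of_squarefree_of_forall_irreducible_dvd hP fun p hp hpP ↦
      hp.natDegree_dvd_iff_dvd_X_pow_card_pow_sub_X.1 (hdeg p hp hpP)
  have hcop : IsCoprime P X :=
    (irreducible_X.coprime_iff_not_dvd.2 fun hX ↦ hP0 (X_dvd_iff.1 hX)).symm
  refine hcop.dvd_of_dvd_mul_left ?_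
  rwa [mul_sub, mul_one, mul_pow_sub_one (pow_ne_zero m Nat.card_pos.ne')]

section BinaryRecurrence

variable {R : Type*} [CommRing R]

/-- The characteristic polynomial `X² - AX - B` of the recurrence
`G (n + 2) = A G (n + 1) + B G n`. -/
noncomputable def binaryCharPoly (A B : R) : R[X] :=
  X ^ 2 - C A * X - C B

theorem natDegree_binaryCharPoly [Nontrivial R] (A B : R) : (binaryCharPoly A B).natDegree = 2 := by
  unfold binaryCharPoly
  compute_degree!

theorem coeff_zero_binaryCharPoly (A B : R) : (binaryCharPoly A B).coeff 0 = -B := by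
  simp [binaryCharPoly]

theorem separable_binaryCharPoly {A B : R} (hΔ : IsUnit (A ^ 2 + 4 * B)) :
    (binaryCharPoly A B).Separable := by
  obtain ⟨c, hc⟩ := hΔ.exists_left_inv
  -- With `P` the quadratic, `P' ^ 2 - 4 * P = Δ`.
  refine ⟨C c * -4, C c * derivative (binaryCharPoly A B), ?_⟩
  have hcΔ : C c * (C A ^ 2 + 4 * C B) = 1 := by
    simpa [C_ofNat] using congrArg C hc
  simp only [binaryCharPoly, derivative_sub, derivative_X_sq, derivative_C_mul_X, derivative_C,
    C_ofNat]
  linear_combination hcΔ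

theorem aeval_shift_binaryCharPoly_eq_zero {M : Type*} [AddCommGroup M] [Module R M] {A B : R}
    {G : ℕ → M} (hG : ∀ n, G (n + 2) = A • G (n + 1) + B • G n) :
    aeval (shift R M) (binaryCharPoly A B) G = 0 := by
  ext n
  have hshift : shift R M G n = G (n + 1) := rfl
  simp [binaryCharPoly, shift_pow_apply, hshift, hG]

end BinaryRecurrence

theorem binaryCharPoly_dvd_X_pow_card_sq_sub_one {F : Type*} [Field F] [Finite F] {A B : F}
    (hB : B ≠ 0) (hΔ : A ^ 2 + 4 * B ≠ 0) :
    binaryCharPoly A B ∣ X ^ (Nat.card F ^ 2 - 1) - 1 := by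
  have hsep : (binaryCharPoly A B).Separable := separable_binaryCharPoly hΔ.isUnit
  refine dvd_X_pow_card_pow_sub_one hsep.squarefree (by simpa [coeff_zero_binaryCharPoly]) ?_
  intro p hp hdvd
  have hpos : 0 < p.natDegree := hp.natDegree_pos
  have hle : p.natDegree ≤ 2 := natDegree_binaryCharPoly A B ▸ natDegree_le_of_dvd hdvd hsep.ne_zero
  interval_cases p.natDegree <;> norm_num

theorem isLeast_period_dvd {α : Type*} {f : ℕ → α} {π N : ℕ}
    (hπ : IsLeast {k | 0 < k ∧ Function.Periodic f k} π) (hN : Function.Periodic f N) : π ∣ N := by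
  obtain ⟨⟨hpos, hper⟩, hmin⟩ := hπ
  have hmod : Function.Periodic f (N % π) := fun n ↦
    calc f (n + N % π) = f (n + N % π + N / π * π) := (hper.nat_mul (N / π) _).symm
      _ = f (n + N) := by rw [add_assoc, Nat.mod_add_div']
      _ = f n := hN n
  by_contra hndvd
  exact (Nat.mod_lt N hpos).not_ge
    (hmin ⟨Nat.pos_of_ne_zero fun h ↦ hndvd (Nat.dvd_of_mod_eq_zero h), hmod⟩)

theorem period_dvd_of_discriminant_nonsquare_general {F M : Type*} [Field F] [Finite F]
    [AddCommGroup M] [Module F M] {A B : F} (hB : B ≠ 0) (hΔ : A ^ 2 + 4 * B ≠ 0) {G : ℕ → M}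
    (hG : ∀ n, G (n + 2) = A • G (n + 1) + B • G n) {π : ℕ}
    (hπ : IsLeast {k | 0 < k ∧ Function.Periodic G k} π) : π ∣ Nat.card F ^ 2 - 1 :=
  isLeast_period_dvd hπ <| periodic_of_aeval_shift_eq_zero
    (binaryCharPoly_dvd_X_pow_card_sq_sub_one hB hΔ) (aeval_shift_binaryCharPoly_eq_zero hG)

/-- If an odd prime `ℓ` does not divide `B` and the discriminant `Δ = A² + 4B` is not a
square modulo `ℓ`, then the minimal period of the binary recurrence sequence modulo `ℓ`
divides `ℓ² - 1`. -/
theorem period_dvd_of_discriminant_nonsquare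
    (ℓ : ℕ) (hℓ : Nat.Prime ℓ) (hodd : Odd ℓ) (A B u v : ℤ) (hB : ¬ (ℓ : ℤ) ∣ B)
    (G : ℕ → ℤ) (hG0 : G 0 = u) (hG1 : G 1 = v)
    (hGrec : ∀ n : ℕ, G (n + 2) = A * G (n + 1) + B * G n)
    (hnsq : ¬ ∃ c : ℤ, c ^ 2 ≡ A ^ 2 + 4 * B [ZMOD (ℓ : ℤ)])
    (π : ℕ)
    (hπ : IsLeast {k : ℕ | 0 < k ∧ ∀ n : ℕ, G (n + k) ≡ G n [ZMOD (ℓ : ℤ)]} π) :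
    π ∣ ℓ ^ 2 - 1 := by
  have : Fact ℓ.Prime := ⟨hℓ⟩
  simp only [← ZMod.intCast_eq_intCast_iff] at hnsq hπ
  have hB0 : (B : ZMod ℓ) ≠ 0 := by rwa [Ne, ZMod.intCast_zmod_eq_zero_iff_dvd]
  have hΔ : (A : ZMod ℓ) ^ 2 + 4 * B ≠ 0 := fun h ↦ hnsq ⟨0, by simp [h]⟩
  simpa using period_dvd_of_discriminant_nonsquare_general (G := fun n ↦ (G n : ZMod ℓ))
    hB0 hΔ (fun n ↦ by simp [hGrec]) hπ
end

section
/- Let p be an odd prime, r ≥ 1 an integer, and λ a nonzero integer that is not the p-th power of an integer. Let ζ ∈ ℂ be a primitive p^r-th root of unity and let α ∈ ℂ be any root of X^{p^r} - λ. Then the degree of the field extension ℚ(ζ, α) over ℚ(ζ) equals p^r. -/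
/-!
Suppose `λ` is not a `p`-th power in `K` but `b ^ p = λ` for some `b` in an abelian extension of
`K`. Then `X ^ p - λ` is irreducible over `K`, so `K(b)` has degree `p`, and it is Galois over `K`
because every intermediate field of an abelian extension is. Hence it contains a primitive `p`-th
root of unity, the quotient of `b` by one of its other conjugates. Such a root has degree at most
`p - 1`, and its degree divides `p`, so it already lies in `K`.

Since `ℚ` contains no primitive `p`-th root of unity for odd `p`, the integer `λ` remains a
non-`p`-th power in the abelian extension `ℚ(ζ)` of `ℚ`, and then `X ^ (p ^ r) - λ` is irreducible
over `ℚ(ζ)`.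
-/

open Polynomial IntermediateField Module

section Field

variable {K L : Type*} [Field K] [Field L] [Algebra K L]

theorem finrank_adjoin_eq_of_irreducible_X_pow_sub_C {n : ℕ} {a : K}
    (hirr : Irreducible (X ^ n - C a)) {α : L} (hα : α ^ n = algebraMap K L a) :
    finrank K K⟮α⟯ = n := by
  have hn : n ≠ 0 := by
    rintro rfl
    exact not_irreducible_C (1 - a) (by simpa using hirr)
  have hmonic : (X ^ n - C a).Monic := monic_X_pow_sub_C a hn
  have hroot : aeval α (X ^ n - C a) = 0 := by simp [hα]
  rw [adjoin.finrank ⟨_, hmonic, hroot⟩,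
    ← minpoly.eq_of_irreducible_of_monic hirr hroot hmonic, natDegree_X_pow_sub_C]

theorem natDegree_minpoly_le_totient_of_isPrimitiveRoot {n : ℕ} (hn : 0 < n) {η : L}
    (hη : IsPrimitiveRoot η n) : (minpoly K η).natDegree ≤ n.totient := by
  have hroot : aeval η (cyclotomic n K) = 0 := by
    rw [aeval_def, ← eval_map, map_cyclotomic]
    exact hη.isRoot_cyclotomic hn
  rw [← natDegree_cyclotomic n K]
  exact natDegree_le_of_dvd (minpoly.dvd K η hroot) (cyclotomic_ne_zero n K)

theorem mem_range_algebraMap_of_isPrimitiveRoot_of_totient_lt (hL : (finrank K L).Prime) {n : ℕ}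
    (hn : 0 < n) (hφ : n.totient < finrank K L) {η : L} (hη : IsPrimitiveRoot η n) :
    η ∈ (algebraMap K L).range := by
  have : FiniteDimensional K L := FiniteDimensional.of_finrank_pos hL.pos
  have hlt : (minpoly K η).natDegree < finrank K L :=
    (natDegree_minpoly_le_totient_of_isPrimitiveRoot hn hη).trans_lt hφ
  rw [← minpoly.natDegree_eq_one_iff]
  exact (hL.eq_one_or_self_of_dvd _ (minpoly.degree_dvd (.of_finite K η))).resolve_right hlt.ne

theorem exists_isPrimitiveRoot_of_isGalois_of_pow_eq [IsGalois K L] {p : ℕ} (hp : p.Prime)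
    {a : K} {b : L} (hb : b ^ p = algebraMap K L a) (hbK : b ∉ (algebraMap K L).range) :
    ∃ η : L, IsPrimitiveRoot η p := by
  have := Fact.mk hp
  obtain ⟨σ, hσ⟩ : ∃ σ : Gal(L/K), σ b ≠ b := by
    by_contra! hfixed
    exact hbK ((InfiniteGalois.mem_range_algebraMap_iff_fixed b).mpr hfixed)
  have hb0 : b ≠ 0 := by
    rintro rfl
    exact hσ (map_zero σ)
  have hpow : (σ b / b) ^ p = 1 := by
    rw [div_pow, ← map_pow, hb, AlgEquiv.commutes, ← hb, div_self (pow_ne_zero p hb0)]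
  have hne : σ b / b ≠ 1 := by rwa [Ne, div_eq_one_iff_eq hb0]
  exact ⟨σ b / b, IsPrimitiveRoot.iff_orderOf.mpr (orderOf_eq_prime hpow hne)⟩

theorem pow_ne_algebraMap_of_isAbelianGalois [IsAbelianGalois K L] {p : ℕ} (hp : p.Prime)
    (hK : ∀ η : K, ¬ IsPrimitiveRoot η p) {a : K} (ha : ∀ c : K, c ^ p ≠ a) (b : L) :
    b ^ p ≠ algebraMap K L a := by
  intro hb
  have hdeg : finrank K K⟮b⟯ = p :=
    finrank_adjoin_eq_of_irreducible_X_pow_sub_C (X_pow_sub_C_irreducible_of_prime hp ha) hb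
  have hgen : AdjoinSimple.gen K b ^ p = algebraMap K K⟮b⟯ a := Subtype.ext hb
  have hgenK : AdjoinSimple.gen K b ∉ (algebraMap K K⟮b⟯).range := by
    rintro ⟨c, hc⟩
    exact ha c ((algebraMap K K⟮b⟯).injective (by rw [map_pow, hc, hgen]))
  obtain ⟨η, hη⟩ := exists_isPrimitiveRoot_of_isGalois_of_pow_eq hp hgen hgenK
  have hφ : p.totient < finrank K K⟮b⟯ := hdeg ▸ p.totient_lt hp.one_lt
  obtain ⟨c, rfl⟩ :=
    mem_range_algebraMap_of_isPrimitiveRoot_of_totient_lt (hdeg.symm ▸ hp) hp.pos hφ hη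
  exact hK c (hη.of_map_of_injective (algebraMap K K⟮b⟯).injective)

theorem isAbelianGalois_adjoin_of_isPrimitiveRoot {n : ℕ} (hn : n ≠ 0) {ζ : L}
    (hζ : IsPrimitiveRoot ζ n) : IsAbelianGalois K K⟮ζ⟯ := by
  have := NeZero.mk hn
  have hcyc : IsCyclotomicExtension {n} K K⟮ζ⟯.toSubalgebra := by
    rw [adjoin_simple_toSubalgebra_of_isAlgebraic (hζ.isIntegral hn.pos).tower_top.isAlgebraic]
    exact hζ.adjoin_isCyclotomicExtension K
  have : IsCyclotomicExtension {n} K K⟮ζ⟯ := hcyc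
  exact IsCyclotomicExtension.isAbelianGalois {n} K K⟮ζ⟯

end Field

theorem not_isPrimitiveRoot_of_two_lt {R : Type*} [CommRing R] [LinearOrder R]
    [IsStrictOrderedRing R] {n : ℕ} (hn : 2 < n) (η : R) : ¬ IsPrimitiveRoot η n := fun hη ↦
  hn.not_ge (hη.eq_orderOf ▸ LinearOrderedRing.orderOf_le_two)

theorem pow_ne_algebraMap_of_isIntegrallyClosed {R K : Type*} [CommRing R]
    [IsIntegrallyClosed R] [CommRing K] [Algebra R K] [IsFractionRing R K] {n : ℕ} (hn : 0 < n)
    {a : R} (ha : ∀ m : R, m ^ n ≠ a) (c : K) : c ^ n ≠ algebraMap R K a := by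
  intro hc
  obtain ⟨m, rfl⟩ := IsIntegrallyClosed.exists_algebraMap_eq_of_isIntegral_pow (R := R) hn
    (hc ▸ isIntegral_algebraMap)
  exact ha m (IsFractionRing.injective R K (by rw [map_pow, hc]))

theorem degree_of_radical_extension_general {K E L : Type*} [Field K] [Field E] [Field L]
    [Algebra K E] [IsAbelianGalois K E] [Algebra E L] {p : ℕ} (hp : p.Prime) (hodd : Odd p)
    (hK : ∀ η : K, ¬ IsPrimitiveRoot η p) {a : K} (ha : ∀ c : K, c ^ p ≠ a) (r : ℕ) {α : L}
    (hα : α ^ p ^ r = algebraMap E L (algebraMap K E a)) : finrank E E⟮α⟯ = p ^ r := by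
  have hE : ∀ b : E, b ^ p ≠ algebraMap K E a := pow_ne_algebraMap_of_isAbelianGalois hp hK ha
  have hp2 : p ≠ 2 := hodd.ne_two_of_dvd_nat dvd_rfl
  exact finrank_adjoin_eq_of_irreducible_X_pow_sub_C
    (X_pow_sub_C_irreducible_of_prime_pow hp hp2 r hE) hα

/-- Let `p` be an odd prime, `r ≥ 1`, and `lam` a nonzero integer which is not a `p`-th
power of an integer. If `ζ ∈ ℂ` is a primitive `p^r`-th root of unity and `α ∈ ℂ` is a
root of `X^(p^r) - lam`, then `[ℚ(ζ, α) : ℚ(ζ)] = p^r`. -/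
theorem degree_of_radical_extension
    (p : ℕ) (hp : Nat.Prime p) (hodd : Odd p) (r : ℕ) (hr : 1 ≤ r)
    (lam : ℤ) (hlam0 : lam ≠ 0) (hlam : ¬ ∃ m : ℤ, m ^ p = lam)
    (ζ α : ℂ) (hζ : IsPrimitiveRoot ζ (p ^ r)) (hα : α ^ (p ^ r) = (lam : ℂ)) :
    Module.finrank (IntermediateField.adjoin ℚ ({ζ} : Set ℂ))
      (IntermediateField.adjoin (IntermediateField.adjoin ℚ ({ζ} : Set ℂ))
        ({α} : Set ℂ)) = p ^ r := by
  have : IsAbelianGalois ℚ ℚ⟮ζ⟯ :=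
    isAbelianGalois_adjoin_of_isPrimitiveRoot (pow_ne_zero r hp.ne_zero) hζ
  exact degree_of_radical_extension_general (K := ℚ) hp hodd
    (not_isPrimitiveRoot_of_two_lt (hp.two_le.lt_of_ne' (hodd.ne_two_of_dvd_nat dvd_rfl)))
    (pow_ne_algebraMap_of_isIntegrallyClosed (a := lam) hp.pos (not_exists.mp hlam)) r
    (by simpa using hα)
end

section
/- Let p be an odd prime and r ≥ 1 an integer. Let λ₁, λ₂ be nonzero integers such that for all integers i, j, if λ₁^i·λ₂^j is the p-th power of a rational number then p divides i and p divides j. Let ζ ∈ ℂ be a primitive p^{r+1}-th root of unity, so that ζ^p is a primitive p^r-th root of unity, and let α₁, α₂ ∈ ℂ be roots of X^{p^r} - λ₁ and X^{p^r} - λ₂ respectively. Then the intersection of ℚ(ζ) with ℚ(ζ^p, α₁, α₂) (as subfields of ℂ) equals ℚ(ζ^p). -/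
/-!
Let `K = k(ω)`, where `k ⊆ ℝ` and `ω` is a primitive `n`-th root of unity with `n` odd, and let
`L = K(α₁, …, αₘ)` with `αᵢ ^ n = lᵢ ∈ k`. Every automorphism of `L / K` multiplies a monomial `a`
in the `αᵢ` by an `n`-th root of unity, which lies in `K`. Hence, for `x` in a normal subextension
`F`, the trace of `a * x` is `a` times an element of `F`, so it vanishes unless `a ∈ F`. If the only
monomials in `F` are those in `K`, then an `x ∈ F` of trace zero is orthogonal to all monomials,
which span `L`, so `x = 0`; thus the trace embeds `F` in `K` and `F = K`.

Apply this to `F = M ∩ L` with `M / k` abelian and `ω ∈ M`. If a monomial `a` lies in `M`, so does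
the real `n`-th root `d` of `a ^ n ∈ k`. As complex conjugation commutes with `Gal(M / k)`, all
conjugates of `d` are real `n`-th roots of the same number, so `d ∈ k`. Independence of the `lᵢ`
then forces `a` to be a monomial in the `lᵢ`.
-/

open IntermediateField Polynomial

section Kummer

variable {K L E : Type*} [Field K] [Field L] [Field E] [Algebra K L] [Algebra K E]
  {n : ℕ} {w : K}

lemma isSeparable_of_pow_mem_bot (hn : (n : K) ≠ 0) {a : E}
    (ha : a ^ n ∈ (⊥ : IntermediateField K E)) : IsSeparable K a := by
  obtain ⟨c, hc⟩ := mem_bot.1 ha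
  obtain rfl | hc0 := eq_or_ne c 0
  · obtain rfl : a = 0 := eq_zero_of_pow_eq_zero (n := n) (by simpa using hc.symm)
    simpa using isSeparable_algebraMap (K := E) (0 : K)
  · exact (separable_X_pow_sub_C c hn hc0).of_dvd (minpoly.dvd _ _ (by simp [hc]))

lemma span_preimage_closure_eq_top {S : Set E} (hS : ∀ s ∈ S, IsAlgebraic K s) :
    Submodule.span K ((adjoin K S).val ⁻¹' Submonoid.closure S) = ⊤ := by
  have hrange : (Submonoid.closure S : Set E) ⊆ Set.range (adjoin K S).val := fun x hx ↦
    ⟨⟨x, Submonoid.closure_le.2 (subset_adjoin K S) hx⟩, rfl⟩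
  refine Submodule.map_injective_of_injective (f := (adjoin K S).val.toLinearMap)
    Subtype.val_injective ?_
  calc
    _ = Submodule.span K (Submonoid.closure S : Set E) := by
      rw [Submodule.map_span, AlgHom.coe_toLinearMap, Set.image_preimage_eq_of_subset hrange]
    _ = Subalgebra.toSubmodule (adjoin K S).toSubalgebra := by
      rw [← Algebra.adjoin_eq_span, adjoin_toSubalgebra_of_isAlgebraic hS]
    _ = _ := by
      ext x
      simp

variable [NeZero n]

lemma exists_eq_pow_mul_of_pow_eq_pow {ω x y : L} (hω : IsPrimitiveRoot ω n)
    (h : x ^ n = y ^ n) : ∃ i, x = ω ^ i * y := by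
  obtain rfl | hy := eq_or_ne y 0
  · exact ⟨0, by simpa [NeZero.ne n] using h⟩
  · obtain ⟨i, -, hi⟩ := hω.eq_pow_of_pow_eq_one (ξ := x / y)
      (by rw [div_pow, h, div_self (pow_ne_zero n hy)])
    exact ⟨i, by rw [hi, div_mul_cancel₀ x hy]⟩

lemma exists_apply_eq_pow_smul_of_pow_mem_bot (hw : IsPrimitiveRoot w n) {a : L}
    (ha : a ^ n ∈ (⊥ : IntermediateField K L)) (σ : Gal(L/K)) : ∃ i, σ a = w ^ i • a := by
  obtain ⟨c, hc⟩ := mem_bot.1 ha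
  simpa only [Algebra.smul_def, map_pow] using
    exists_eq_pow_mul_of_pow_eq_pow (hw.map_of_injective (algebraMap K L).injective)
      (by rw [← map_pow, ← hc, AlgEquiv.commutes] : σ a ^ n = a ^ n)

lemma mem_of_trace_mul_ne_zero [FiniteDimensional K L] [IsGalois K L] (hw : IsPrimitiveRoot w n)
    {F : IntermediateField K L} [Normal K F] {a x : L}
    (ha : a ^ n ∈ (⊥ : IntermediateField K L)) (hx : x ∈ F)
    (htr : Algebra.trace K L (a * x) ≠ 0) : a ∈ F := by
  choose i hi using exists_apply_eq_pow_smul_of_pow_mem_bot hw ha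
  set y : L := ∑ σ : Gal(L/K), w ^ i σ • σ x
  have htrace : algebraMap K L (Algebra.trace K L (a * x)) = a * y := by
    rw [trace_eq_sum_automorphisms, Finset.mul_sum]
    refine Finset.sum_congr rfl fun σ _ ↦ ?_
    rw [map_mul, hi, smul_mul_assoc, mul_smul_comm]
  have hy : y ∈ F := sum_mem fun σ _ ↦
    F.smul_mem (normal_iff_forall_map_le'.1 ‹Normal K F› σ ⟨x, hx, rfl⟩)
  have hy0 : y ≠ 0 := by
    intro hy0
    rw [hy0, mul_zero, map_eq_zero] at htrace
    exact htr htrace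
  rw [eq_div_of_mul_eq hy0 htrace.symm]
  exact div_mem (F.algebraMap_mem _) hy

lemma eq_bot_of_span_radicals_eq_top [FiniteDimensional K L] [IsGalois K L]
    (hw : IsPrimitiveRoot w n)
    {T : Set L} (hT : ∀ a ∈ T, a ^ n ∈ (⊥ : IntermediateField K L)) (hspan : Submodule.span K T = ⊤)
    (F : IntermediateField K L) [Normal K F]
    (hTF : ∀ a ∈ T, a ∈ F → a ∈ (⊥ : IntermediateField K L)) :
    F = ⊥ := by
  have orthogonal {x : L} (hx : x ∈ F) (hx0 : Algebra.trace K L x = 0) :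
      ∀ a ∈ T, Algebra.trace K L (a * x) = 0 := by
    intro a ha
    by_contra htr
    obtain ⟨c, rfl⟩ := mem_bot.1 (hTF a ha (mem_of_trace_mul_ne_zero hw (hT a ha) hx htr))
    rw [← Algebra.smul_def, map_smul, hx0, smul_zero] at htr
    exact htr rfl
  have trace_injective :
      Function.Injective (Algebra.trace K L ∘ₗ F.val.toLinearMap) := by
    refine (injective_iff_map_eq_zero _).2 fun x hx ↦ Subtype.ext ?_
    refine (traceForm_nondegenerate K L).1 x fun a ↦ ?_
    have ha : a ∈ Submodule.span K T := hspan ▸ Submodule.mem_top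
    have hle : Submodule.span K T ≤ (Algebra.traceForm K L x).ker :=
      Submodule.span_le.2 fun b hb ↦ by
        simpa [Algebra.traceForm_apply, mul_comm] using orthogonal x.2 hx b hb
    exact hle ha
  refine finrank_eq_one_iff.1 (le_antisymm ?_ Module.finrank_pos)
  simpa using LinearMap.finrank_le_finrank_of_injective trace_injective

lemma isGalois_adjoin_of_forall_pow_mem_bot (hw : IsPrimitiveRoot w n) {S : Set E}
    (hS : ∀ s ∈ S, s ^ n ∈ (⊥ : IntermediateField K E)) : IsGalois K (adjoin K S) := by
  have hsep (s) (hs : s ∈ S) : IsSeparable K s :=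
    isSeparable_of_pow_mem_bot hw.neZero'.out (hS s hs)
  have hsplits (s) (hs : s ∈ S) :
      ((minpoly K s).map (algebraMap K (adjoin K S))).Splits := by
    obtain ⟨c, hc⟩ := mem_bot.1 (hS s hs)
    have hdvd : minpoly K s ∣ X ^ n - C c := minpoly.dvd _ _ (by simp [hc])
    have hsplit : (X ^ n - C (algebraMap K (adjoin K S) c)).Splits :=
      X_pow_sub_C_splits_of_isPrimitiveRoot (hw.map_of_injective (algebraMap K _).injective)
        (α := ⟨s, subset_adjoin K S hs⟩) (Subtype.ext hc.symm)
    exact hsplit.of_dvd (X_pow_sub_C_ne_zero (NeZero.pos n) _)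
      (by simpa using Polynomial.map_dvd (algebraMap K (adjoin K S)) hdvd)
  have : Algebra.IsSeparable K (adjoin K S) := (isSeparable_adjoin_iff_isSeparable K E).2 hsep
  have : Normal K (adjoin K S) := normal_iff.2 fun x ↦ by
    refine ⟨Algebra.IsIntegral.isIntegral x, ?_⟩
    rw [minpoly_eq]
    exact splits_of_mem_adjoin K E (fun s hs ↦ ⟨(hsep s hs).isIntegral, hsplits s hs⟩) x.2
  exact ⟨⟩

lemma inf_adjoin_eq_bot_of_forall_mem_closure (hw : IsPrimitiveRoot w n) {S : Set E} [Finite S]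
    (hS : ∀ s ∈ S, s ^ n ∈ (⊥ : IntermediateField K E)) (M : IntermediateField K E) [Normal K M]
    (hM : ∀ a ∈ Submonoid.closure S, a ∈ M → a ∈ (⊥ : IntermediateField K E)) :
    M ⊓ adjoin K S = ⊥ := by
  have hGal := isGalois_adjoin_of_forall_pow_mem_bot hw hS
  have hint (s) (hs : s ∈ S) : IsIntegral K s :=
    (isSeparable_of_pow_mem_bot hw.neZero'.out (hS s hs)).isIntegral
  have : FiniteDimensional K (adjoin K S) := finiteDimensional_adjoin hint
  have hpow : Submonoid.closure S ≤
      (⊥ : IntermediateField K E).toSubalgebra.toSubmonoid.comap (powMonoidHom n) :=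
    Submonoid.closure_le.2 hS
  have hle : M ⊓ adjoin K S ≤ adjoin K S := inf_le_right
  have : Normal K (restrict hle) := Normal.of_algEquiv (restrictAlgEquiv hle)
  have hbot {a : adjoin K S} (ha : (a : E) ∈ (⊥ : IntermediateField K E)) :
      a ∈ (⊥ : IntermediateField K (adjoin K S)) := by
    rwa [← mem_lift, lift_bot]
  have hrestrict : restrict hle = ⊥ :=
    eq_bot_of_span_radicals_eq_top hw (fun a ha ↦ hbot (hpow ha))
      (span_preimage_closure_eq_top fun s hs ↦ (hint s hs).isAlgebraic) _
      fun a ha haM ↦ hbot (hM a ha ((mem_restrict hle a).1 haM).1)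
  rw [← lift_restrict hle, hrestrict, lift_bot]

end Kummer

section RealRoots

variable {k : Type*} [Field k] [Algebra k ℝ] {n : ℕ}

lemma odd_pow_injective_of_algebra_real (hn : Odd n) : Function.Injective fun x : k ↦ x ^ n :=
  fun x y h ↦ (algebraMap k ℝ).injective <| hn.strictMono_pow.injective <| by
    simpa only [← map_pow] using congrArg (algebraMap k ℝ) h

lemma exists_real_pow_eq_of_odd (hn : Odd n) (x : ℝ) : ∃ d : ℝ, d ^ n = x := by
  obtain h | h := le_total 0 x
  · exact ⟨x ^ (n⁻¹ : ℝ), Real.rpow_inv_natCast_pow h hn.pos.ne'⟩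
  · refine ⟨-(-x) ^ (n⁻¹ : ℝ), ?_⟩
    rw [hn.neg_pow, Real.rpow_inv_natCast_pow (neg_nonneg.2 h) hn.pos.ne', neg_neg]

variable [Algebra k ℂ] [IsScalarTower k ℝ ℂ] {M : IntermediateField k ℂ} [IsAbelianGalois k M]

lemma exists_apply_ofReal_eq_ofReal {x : ℝ} (hx : (x : ℂ) ∈ M) (σ : Gal(M/k)) :
    ∃ y : ℝ, (σ ⟨x, hx⟩ : ℂ) = y := by
  let conj : Gal(M/k) := (Complex.conjAe.restrictScalars k).restrictNormal M
  have hconj (z : M) : (conj z : ℂ) = starRingEnd ℂ z :=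
    AlgEquiv.restrictNormal_commutes (Complex.conjAe.restrictScalars k) M z
  have hfix : conj ⟨x, hx⟩ = ⟨x, hx⟩ := Subtype.ext ((hconj _).trans (Complex.conj_ofReal x))
  have hcomm : conj (σ ⟨x, hx⟩) = σ (conj ⟨x, hx⟩) :=
    DFunLike.congr_fun (mul_comm' conj σ) _
  rw [hfix] at hcomm
  rw [← Complex.conj_eq_iff_real, ← hconj, hcomm]

lemma ofReal_mem_bot_of_odd_pow_mem_bot (hn : Odd n) {x : ℝ} (hx : (x : ℂ) ∈ M)
    (hxn : (x : ℂ) ^ n ∈ (⊥ : IntermediateField k ℂ)) :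
    (x : ℂ) ∈ (⊥ : IntermediateField k ℂ) := by
  obtain ⟨q, hq⟩ := mem_bot.1 hxn
  suffices hfix : ∀ σ : Gal(M/k), σ ⟨x, hx⟩ = ⟨x, hx⟩ by
    obtain ⟨t, ht⟩ := (InfiniteGalois.mem_range_algebraMap_iff_fixed _).2 hfix
    exact mem_bot.2 ⟨t, congrArg Subtype.val ht⟩
  intro σ
  obtain ⟨y, hy⟩ := exists_apply_ofReal_eq_ofReal hx σ
  have hpow : (⟨x, hx⟩ : M) ^ n = algebraMap k M q := Subtype.ext hq.symm
  have hσpow : σ ⟨x, hx⟩ ^ n = ⟨x, hx⟩ ^ n := by rw [← map_pow, hpow, AlgEquiv.commutes]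
  have hyx : (y : ℂ) ^ n = (x : ℂ) ^ n := hy ▸ congrArg Subtype.val hσpow
  have : y = x := hn.strictMono_pow.injective (mod_cast hyx)
  exact Subtype.ext (this ▸ hy)

lemma exists_pow_eq_of_pow_eq_algebraMap (hn : Odd n) {ω : ℂ} (hω : IsPrimitiveRoot ω n)
    (hωM : ω ∈ M) {a : ℂ} (ha : a ∈ M) {q : k} (haq : a ^ n = algebraMap k ℂ q) :
    ∃ t : k, t ^ n = q := by
  have : NeZero n := ⟨hn.pos.ne'⟩
  obtain ⟨d, hd⟩ := exists_real_pow_eq_of_odd hn (algebraMap k ℝ q)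
  have hdq : (d : ℂ) ^ n = algebraMap k ℂ q := by
    rw [IsScalarTower.algebraMap_apply k ℝ ℂ, ← hd, Complex.coe_algebraMap, Complex.ofReal_pow]
  have hdM : (d : ℂ) ∈ M := by
    obtain ⟨i, hi⟩ := exists_eq_pow_mul_of_pow_eq_pow hω (hdq.trans haq.symm)
    exact hi ▸ mul_mem (pow_mem hωM i) ha
  obtain ⟨t, ht⟩ := mem_bot.1
    (ofReal_mem_bot_of_odd_pow_mem_bot hn hdM (hdq ▸ IntermediateField.algebraMap_mem _ q))
  exact ⟨t, (algebraMap k ℂ).injective (by rw [map_pow, ht, hdq])⟩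

end RealRoots

/-- The family `l` is multiplicatively independent modulo `n`-th powers: only the obvious monomials
in it are `n`-th powers. Natural exponents suffice, since for invertible `l i` an integer exponent
can be changed by a multiple of `n`. -/
def MulIndepModPow {ι G : Type*} [Fintype ι] [CommMonoid G] (n : ℕ) (l : ι → G) : Prop :=
  ∀ e : ι → ℕ, (∃ q : G, q ^ n = ∏ i, l i ^ e i) → ∀ i, n ∣ e i

namespace MulIndepModPow

variable {ι G : Type*} [Fintype ι] [CommMonoid G] {m n : ℕ} {l : ι → G}

lemma exists_eq_mul (hl : MulIndepModPow n l) (hinj : Function.Injective fun x : G ↦ x ^ n)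
    {e : ι → ℕ} {q : G} (hq : q ^ n = ∏ i, l i ^ e i) :
    ∃ f : ι → ℕ, (∀ i, e i = n * f i) ∧ q = ∏ i, l i ^ f i := by
  choose f hf using hl e ⟨q, hq⟩
  refine ⟨f, hf, hinj ?_⟩
  simp only [hq, hf, pow_mul', Finset.prod_pow]

lemma mul (hn : MulIndepModPow n l) (hm : MulIndepModPow m l)
    (hinj : Function.Injective fun x : G ↦ x ^ n) : MulIndepModPow (n * m) l := by
  rintro e ⟨q, hq⟩ i
  obtain ⟨f, hf, hqf⟩ := hn.exists_eq_mul hinj (q := q ^ m) (by rw [← hq, pow_mul'])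
  exact hf i ▸ mul_dvd_mul_left n (hm f ⟨q, hqf⟩ i)

lemma pow (hl : MulIndepModPow n l) (hinj : Function.Injective fun x : G ↦ x ^ n) (r : ℕ) :
    MulIndepModPow (n ^ r) l := by
  induction r with
  | zero => simp [MulIndepModPow]
  | succ r ih => exact pow_succ' n r ▸ hl.mul ih hinj

lemma pair {G : Type*} [CommGroupWithZero G] {a b : G}
    (h : ∀ i j : ℤ, (∃ q : G, q ^ n = a ^ i * b ^ j) → (n : ℤ) ∣ i ∧ (n : ℤ) ∣ j) :
    MulIndepModPow n ![a, b] := by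
  rintro e ⟨q, hq⟩
  have hdvd := h (e 0) (e 1) ⟨q, by simpa using hq⟩
  exact Fin.forall_fin_two.2 ⟨mod_cast hdvd.1, mod_cast hdvd.2⟩

end MulIndepModPow

section AbelianIntersection

variable {k : Type*} [Field k] [Algebra k ℝ] [Algebra k ℂ] [IsScalarTower k ℝ ℂ]
  {M : IntermediateField k ℂ} [IsAbelianGalois k M] {n : ℕ} {ω : ℂ}
  {ι : Type*} [Fintype ι] {l : ι → k} {α : ι → ℂ}

lemma mem_bot_of_mem_closure_range_radicals (hn : Odd n) (hω : IsPrimitiveRoot ω n) (hωM : ω ∈ M)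
    (hl : MulIndepModPow n l) (hα : ∀ i, α i ^ n = algebraMap k ℂ (l i)) {a : ℂ}
    (ha : a ∈ Submonoid.closure (Set.range α)) (haM : a ∈ M) :
    a ∈ (⊥ : IntermediateField k ℂ) := by
  obtain ⟨e, rfl⟩ := Submonoid.mem_closure_range_iff_of_fintype.1 ha
  have hpow : (∏ i, α i ^ e i) ^ n = algebraMap k ℂ (∏ i, l i ^ e i) := by
    simp only [← Finset.prod_pow, map_prod, map_pow, ← hα, ← pow_mul, mul_comm]
  obtain ⟨t, ht⟩ := exists_pow_eq_of_pow_eq_algebraMap hn hω hωM haM hpow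
  obtain ⟨f, hf, -⟩ := hl.exists_eq_mul (odd_pow_injective_of_algebra_real hn) ht
  refine prod_mem fun i _ ↦ ?_
  rw [hf, pow_mul, hα]
  exact pow_mem (IntermediateField.algebraMap_mem _ _) _

theorem cyclotomic_radical_intersection_general (hn : Odd n) (hω : IsPrimitiveRoot ω n)
    (hωM : ω ∈ M) (hl : MulIndepModPow n l) (hα : ∀ i, α i ^ n = algebraMap k ℂ (l i)) :
    M ⊓ adjoin k (insert ω (Set.range α)) = adjoin k {ω} := by
  have : NeZero n := ⟨hn.pos.ne'⟩
  have hle : k⟮ω⟯ ≤ M := adjoin_simple_le_iff.2 hωM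
  have : Normal k (extendScalars hle) := inferInstanceAs (Normal k M)
  have : Normal k⟮ω⟯ (extendScalars hle) := .tower_top_of_normal k _ _
  have hω' : IsPrimitiveRoot (AdjoinSimple.gen k ω) n :=
    IsPrimitiveRoot.coe_submonoidClass_iff.1 hω
  have hbot {a : ℂ} (ha : a ∈ (⊥ : IntermediateField k ℂ)) :
      a ∈ (⊥ : IntermediateField k⟮ω⟯ ℂ) :=
    mem_bot.2 ⟨⟨a, bot_le (a := k⟮ω⟯) ha⟩, rfl⟩
  have hinf : extendScalars hle ⊓ adjoin k⟮ω⟯ (Set.range α) = ⊥ := by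
    refine inf_adjoin_eq_bot_of_forall_mem_closure hω' ?_ _ fun a ha haM ↦
      hbot (mem_bot_of_mem_closure_range_radicals hn hω hωM hl hα ha haM)
    rintro _ ⟨i, rfl⟩
    exact hbot (hα i ▸ IntermediateField.algebraMap_mem _ _)
  have hrestrict := congrArg (IntermediateField.restrictScalars k) hinf
  rwa [← restrictScalars_inf, extendScalars_restrictScalars, adjoin_adjoin_left,
    restrictScalars_bot_eq_self] at hrestrict

end AbelianIntersection

lemma isAbelianGalois_adjoin_of_isPrimitiveRoot_s12 {k E : Type*} [Field k] [Field E] [Algebra k E]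
    {n : ℕ} [NeZero n] {ζ : E} (hζ : IsPrimitiveRoot ζ n) : IsAbelianGalois k k⟮ζ⟯ := by
  have : IsCyclotomicExtension {n} k k⟮ζ⟯ := by
    change IsCyclotomicExtension {n} k k⟮ζ⟯.toSubalgebra
    rw [adjoin_simple_toSubalgebra_of_isAlgebraic
      (hζ.isIntegral (NeZero.pos n)).tower_top.isAlgebraic]
    exact hζ.adjoin_isCyclotomicExtension k
  exact IsCyclotomicExtension.isAbelianGalois {n} k k⟮ζ⟯

/-- Let `p` be an odd prime, `r ≥ 1`, and `l₁`, `l₂` nonzero integers that are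
multiplicatively independent modulo `p`-th powers in `ℚ×`. If `ζ ∈ ℂ` is a primitive
`p^(r+1)`-th root of unity (so `ζ^p` is a primitive `p^r`-th root of unity) and
`α₁`, `α₂ ∈ ℂ` are roots of `X^(p^r) - l₁` and `X^(p^r) - l₂`, then
`ℚ(ζ) ∩ ℚ(ζ^p, α₁, α₂) = ℚ(ζ^p)`. -/
theorem cyclotomic_radical_intersection
    (p : ℕ) (hp : Nat.Prime p) (hodd : Odd p) (r : ℕ) (hr : 1 ≤ r)
    (l₁ l₂ : ℤ) (hl₁ : l₁ ≠ 0) (hl₂ : l₂ ≠ 0)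
    (hind : ∀ i j : ℤ, (∃ q : ℚ, q ^ p = (l₁ : ℚ) ^ i * (l₂ : ℚ) ^ j) →
      (p : ℤ) ∣ i ∧ (p : ℤ) ∣ j)
    (ζ α₁ α₂ : ℂ) (hζ : IsPrimitiveRoot ζ (p ^ (r + 1)))
    (hα₁ : α₁ ^ (p ^ r) = (l₁ : ℂ)) (hα₂ : α₂ ^ (p ^ r) = (l₂ : ℂ)) :
    IntermediateField.adjoin ℚ ({ζ} : Set ℂ) ⊓
        IntermediateField.adjoin ℚ ({ζ ^ p, α₁, α₂} : Set ℂ)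
      = IntermediateField.adjoin ℚ ({ζ ^ p} : Set ℂ) := by
  have : NeZero p := ⟨hp.ne_zero⟩
  have := isAbelianGalois_adjoin_of_isPrimitiveRoot_s12 (k := ℚ) hζ
  have hl := (MulIndepModPow.pair hind).pow hodd.strictMono_pow.injective r
  have hω : IsPrimitiveRoot (ζ ^ p) (p ^ r) := hζ.pow (NeZero.pos _) (pow_succ' p r)
  simpa [Set.pair_comm] using cyclotomic_radical_intersection_general (α := ![α₁, α₂]) hodd.pow hω
    (pow_mem (mem_adjoin_simple_self ℚ ζ) p) hl (Fin.forall_fin_two.2 (by simp [hα₁, hα₂]))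
end

section
/- Let G be the binary recurrence sequence with parameters A = 1, B = 1 and initial values G_0 = 2, G_1 = 9 (so G_{n+2} = G_{n+1} + G_n). Then for every prime q ∈ {3, 5, 7, 11, 13, 17}, the sequence contains no q-th powers: there are no n ≥ 0 and x ∈ ℤ with G_n = x^q. -/
/-!
If `p` is a prime with `p ≡ 1 [MOD q]`, then Fermat's little theorem forces every `q`-th power `a`
to satisfy `a ^ ((p - 1) / q + 1) ≡ a [ZMOD p]`, where the extra factor `a` covers the case `p ∣ a`.
A binary recurrence sequence is periodic modulo `p` once two consecutive terms return to the initial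
values. Hence finitely many primes with a common period `N` exclude all `q`-th powers as soon as
each of the first `N` terms violates the congruence for one of them.
-/

theorem pow_pow_card_sub_one_div_add_one {K : Type*} [Field K] [Fintype K] {q : ℕ}
    (hq : q ∣ Fintype.card K - 1) (x : K) :
    (x ^ q) ^ ((Fintype.card K - 1) / q + 1) = x ^ q := by
  have card_gt_one : 1 < Fintype.card K := Fintype.one_lt_card
  have q_pos : 0 < q := Nat.pos_of_dvd_of_pos hq (by lia)
  have exponent_eq : q * ((Fintype.card K - 1) / q + 1) = Fintype.card K + (q - 1) := by
    rw [mul_add, Nat.mul_div_cancel' hq]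
    lia
  calc (x ^ q) ^ ((Fintype.card K - 1) / q + 1)
      = x ^ Fintype.card K * x ^ (q - 1) := by rw [← pow_mul, exponent_eq, pow_add]
    _ = x * x ^ (q - 1) := by rw [FiniteField.pow_card]
    _ = x ^ q := mul_pow_sub_one q_pos.ne' x

theorem pow_pow_sub_one_div_add_one_modEq {p q : ℕ} (hp : p.Prime) (hpq : p ≡ 1 [MOD q]) (x : ℤ) :
    (x ^ q) ^ ((p - 1) / q + 1) ≡ x ^ q [ZMOD p] := by
  have : Fact p.Prime := ⟨hp⟩
  have hq : q ∣ p - 1 := (Nat.modEq_iff_dvd' hp.one_le).mp hpq.symm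
  rw [← ZMod.intCast_eq_intCast_iff]
  simpa only [Int.cast_pow, ZMod.card] using
    pow_pow_card_sub_one_div_add_one (by rwa [ZMod.card]) (x : ZMod p)

section BinaryRecurrence

/-- The binary recurrence sequence `G` with `G 0 = u`, `G 1 = v` and
`G (n + 2) = A * G (n + 1) + B * G n`, in a form that can be evaluated. -/
def binaryRecurrence (A B u v : ℤ) : ℕ → ℤ
  | 0 => u
  | 1 => v
  | n + 2 => A * binaryRecurrence A B u v (n + 1) + B * binaryRecurrence A B u v n

variable {A B u v : ℤ}

theorem eq_binaryRecurrence {G : ℕ → ℤ} (h0 : G 0 = u) (h1 : G 1 = v)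
    (hrec : ∀ n, G (n + 2) = A * G (n + 1) + B * G n) : G = binaryRecurrence A B u v := by
  funext n
  induction n using Nat.twoStepInduction with
  | zero => exact h0
  | one => exact h1
  | more n ih ih_succ => rw [hrec, ih, ih_succ, binaryRecurrence]

theorem periodic_binaryRecurrence_emod {m : ℤ} {N : ℕ}
    (hN : binaryRecurrence A B u v N ≡ u [ZMOD m])
    (hN_succ : binaryRecurrence A B u v (N + 1) ≡ v [ZMOD m]) :
    Function.Periodic (fun n ↦ binaryRecurrence A B u v n % m) N := by
  intro n
  change binaryRecurrence A B u v (n + N) ≡ binaryRecurrence A B u v n [ZMOD m]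
  induction n using Nat.twoStepInduction with
  | zero => simpa only [zero_add, binaryRecurrence] using hN
  | one => simpa only [add_comm 1 N, binaryRecurrence] using hN_succ
  | more n ih ih_succ =>
    rw [add_right_comm] at ih_succ ⊢
    exact (ih_succ.mul_left A).add (ih.mul_left B)

/-- A certificate that the binary recurrence sequence contains no `q`-th powers: primes
`p ≡ 1 [MOD q]` modulo each of which the sequence has period `N` (not necessarily the least one),
such that every term of a period fails, for one of them, the congruence that holds for `q`-th
powers. -/
structure IsPowerSieve (A B u v : ℤ) (q N : ℕ) (S : Finset ℕ) : Prop where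
  period_pos : 0 < N
  prime : ∀ p ∈ S, p.Prime
  modEq_one : ∀ p ∈ S, p ≡ 1 [MOD q]
  period_modEq : ∀ p ∈ S, binaryRecurrence A B u v N ≡ u [ZMOD p]
  period_succ_modEq : ∀ p ∈ S, binaryRecurrence A B u v (N + 1) ≡ v [ZMOD p]
  exists_not_modEq : ∀ r < N, ∃ p ∈ S,
    ¬ binaryRecurrence A B u v r ^ ((p - 1) / q + 1) ≡ binaryRecurrence A B u v r [ZMOD p]

theorem IsPowerSieve.binaryRecurrence_ne_pow {q N : ℕ} {S : Finset ℕ}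
    (h : IsPowerSieve A B u v q N S) (n : ℕ) (x : ℤ) : binaryRecurrence A B u v n ≠ x ^ q := by
  intro hx
  obtain ⟨p, hpS, not_modEq⟩ := h.exists_not_modEq (n % N) (Nat.mod_lt n h.period_pos)
  have mod_modEq : binaryRecurrence A B u v (n % N) ≡ x ^ q [ZMOD p] :=
    hx ▸ (periodic_binaryRecurrence_emod (h.period_modEq p hpS)
      (h.period_succ_modEq p hpS)).map_mod_nat n
  have fermat := pow_pow_sub_one_div_add_one_modEq (h.prime p hpS) (h.modEq_one p hpS) x
  exact not_modEq (((mod_modEq.pow _).trans fermat).trans mod_modEq.symm)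

end BinaryRecurrence

theorem exists_isPowerSieve_one_one_two_nine {q : ℕ}
    (hq : q ∈ ({3, 5, 7, 11, 13, 17} : Finset ℕ)) : ∃ N S, IsPowerSieve 1 1 2 9 q N S := by
  simp only [Finset.mem_insert, Finset.mem_singleton] at hq
  rcases hq with rfl | rfl | rfl | rfl | rfl | rfl
  -- The periods and primes were found by a search over primes `p ≡ 1 [MOD q]` of small period.
  on_goal 1 => use 60, {31, 61}
  on_goal 2 => use 30, {11, 31}
  on_goal 3 => use 76, {113}
  on_goal 4 => use 22, {199}
  on_goal 5 => use 78, {79, 521}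
  on_goal 6 => use 102, {919, 3571}
  all_goals
    constructor
    case prime => norm_num
    all_goals decide +kernel

/-- The binary recurrence sequence with `G 0 = 2`, `G 1 = 9` and
`G (n+2) = G (n + 1) + G n` contains no `q`-th powers for any prime
`q ∈ {3, 5, 7, 11, 13, 17}`. -/
theorem no_powers_A1_B1_u2_v9
    (G : ℕ → ℤ) (hG0 : G 0 = 2) (hG1 : G 1 = 9)
    (hGrec : ∀ n : ℕ, G (n + 2) = G (n + 1) + G n) :
    ∀ q ∈ ({3, 5, 7, 11, 13, 17} : Finset ℕ), Nat.Prime q →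
      ¬ ∃ (n : ℕ) (x : ℤ), G n = x ^ q := by
  rintro q hq - ⟨n, x, hx⟩
  have hG : G = binaryRecurrence 1 1 2 9 :=
    eq_binaryRecurrence hG0 hG1 fun n ↦ by rw [hGrec, one_mul, one_mul]
  obtain ⟨N, S, hS⟩ := exists_isPowerSieve_one_one_two_nine hq
  exact hS.binaryRecurrence_ne_pow n x (hG ▸ hx)
end

section
/- Let G be the binary recurrence sequence with parameters A = 2, B = 1 and initial values G_0 = 2, G_1 = 2 (so G_{n+2} = 2·G_{n+1} + G_n). Then for every prime q ∈ {3, 5, 7, 11, 13, 17}, the sequence contains no q-th powers: there are no n ≥ 0 and x ∈ ℤ with G_n = x^q. -/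
/-!
If a prime `p` divides `A` but not `B`, then in `A * G (n + 1) + B * G n` the first summand has
strictly larger `p`-adic valuation than the second, so a common valuation `k` of `G 0` and `G 1`
is the valuation of every term. The valuation of `x ^ q` is a multiple of `q`, so `q ∤ k` excludes
`q`-th powers. For `A = 2`, `B = 1`, `G 0 = G 1 = 2` take `p = 2`, where `k = 1`.
-/

theorem dvd_of_emultiplicity_pow_eq_natCast {M : Type*} [CommMonoidWithZero M] [IsCancelMulZero M]
    {p : M} (hp : Prime p) {x : M} {q k : ℕ} (h : emultiplicity p (x ^ q) = k) : q ∣ k := by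
  rw [emultiplicity_pow hp] at h
  rcases eq_or_ne q 0 with rfl | hq
  · simpa [eq_comm] using h
  have hx : emultiplicity p x ≠ ⊤ := by
    intro htop
    rw [htop, ENat.mul_top (Nat.cast_ne_zero.2 hq)] at h
    exact ENat.top_ne_natCast k h
  obtain ⟨m, hm⟩ := ENat.ne_top_iff_exists.1 hx
  rw [← hm] at h
  exact ⟨m, by exact_mod_cast h.symm⟩

section

variable {R : Type*} [CommRing R] [IsDomain R] {p : R}

theorem emultiplicity_mul_add_mul_of_dvd_of_not_dvd (hp : Prime p) {A B a b : R} (hA : p ∣ A)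
    (hB : ¬ p ∣ B) (hb : FiniteMultiplicity p b)
    (hba : emultiplicity p b ≤ emultiplicity p a) :
    emultiplicity p (A * a + B * b) = emultiplicity p b := by
  have hBb : emultiplicity p (B * b) = emultiplicity p b := by
    rw [emultiplicity_mul hp, emultiplicity_eq_zero.2 hB, zero_add]
  have hlt : emultiplicity p (B * b) < emultiplicity p (A * a) := by
    calc emultiplicity p (B * b) = emultiplicity p b := hBb
      _ < emultiplicity p b + 1 :=
        ENat.lt_add_one_iff (finiteMultiplicity_iff_emultiplicity_ne_top.1 hb) |>.2 le_rfl
      _ ≤ emultiplicity p a + emultiplicity p A :=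
        add_le_add hba (Order.one_le_iff_pos.2 (emultiplicity_pos_of_dvd hA))
      _ = emultiplicity p (A * a) := by rw [emultiplicity_mul hp, add_comm]
  rw [emultiplicity_add_of_gt hlt, hBb]

theorem emultiplicity_eq_of_binary_recurrence (hp : Prime p) {A B : R} (hA : p ∣ A)
    (hB : ¬ p ∣ B) {G : ℕ → R} (hG : ∀ n, G (n + 2) = A * G (n + 1) + B * G n) {k : ℕ}
    (h₀ : emultiplicity p (G 0) = k) (h₁ : emultiplicity p (G 1) = k) (n : ℕ) :
    emultiplicity p (G n) = k := by
  induction n using Nat.twoStepInduction with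
  | zero => exact h₀
  | one => exact h₁
  | more n ih₀ ih₁ =>
    have hfin : FiniteMultiplicity p (G n) :=
      finiteMultiplicity_of_emultiplicity_eq_natCast ih₀
    rw [hG, emultiplicity_mul_add_mul_of_dvd_of_not_dvd hp hA hB hfin (ih₀.trans ih₁.symm).le, ih₀]

theorem no_powers_A2_B1_u2_v2_general (hp : Prime p) {A B : R} (hA : p ∣ A) (hB : ¬ p ∣ B)
    {G : ℕ → R} (hG : ∀ n, G (n + 2) = A * G (n + 1) + B * G n) {k : ℕ}
    (h₀ : emultiplicity p (G 0) = k) (h₁ : emultiplicity p (G 1) = k) {q : ℕ} (hq : ¬ q ∣ k) :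
    ¬ ∃ (n : ℕ) (x : R), G n = x ^ q := by
  rintro ⟨n, x, hx⟩
  have hk : emultiplicity p (G n) = k := emultiplicity_eq_of_binary_recurrence hp hA hB hG h₀ h₁ n
  exact hq (dvd_of_emultiplicity_pow_eq_natCast hp (hx ▸ hk))

end

/-- The binary recurrence sequence with `G 0 = 2`, `G 1 = 2` and
`G (n+2) = 2 * G (n + 1) + G n` contains no `q`-th powers for any prime
`q ∈ {3, 5, 7, 11, 13, 17}`. -/
theorem no_powers_A2_B1_u2_v2
    (G : ℕ → ℤ) (hG0 : G 0 = 2) (hG1 : G 1 = 2)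
    (hGrec : ∀ n : ℕ, G (n + 2) = 2 * G (n + 1) + G n) :
    ∀ q ∈ ({3, 5, 7, 11, 13, 17} : Finset ℕ), Nat.Prime q →
      ¬ ∃ (n : ℕ) (x : ℤ), G n = x ^ q := by
  have h2 : emultiplicity (2 : ℤ) 2 = (1 : ℕ) := by
    simpa only [pow_one] using emultiplicity_pow_self_of_prime Int.prime_two 1
  exact fun q _ hq ↦ no_powers_A2_B1_u2_v2_general Int.prime_two dvd_rfl (B := 1) (by decide)
    (by simpa only [one_mul] using hGrec) (hG0 ▸ h2) (hG1 ▸ h2) hq.not_dvd_one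
end

section
/- Let G be the binary recurrence sequence with parameters A = 2, B = 2 and initial values G_0 = 3, G_1 = 2 (so G_{n+2} = 2·G_{n+1} + 2·G_n). Then for every prime q ∈ {3, 5, 7, 11, 13, 17}, the sequence contains no q-th powers: there are no n ≥ 0 and x ∈ ℤ with G_n = x^q. -/
/-!
Let `p` be a prime with `q ∣ p - 1`. By Fermat's little theorem the `(p - 1) / q`-th power of a
`q`-th power is `0` or `1` modulo `p`, so any other value certifies that a number is not a `q`-th
power. Modulo a product of such primes the pairs of consecutive terms of a binary recurrence
sequence run through a periodic orbit, and it suffices to find, for every term in one period, one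
of the primes that certifies it.
-/

theorem pow_pow_modEq_zero_or_one {p q : ℕ} (hp : p.Prime) (hq : q ∣ p - 1) (x : ℤ) :
    (x ^ q) ^ ((p - 1) / q) ≡ 0 [ZMOD p] ∨ (x ^ q) ^ ((p - 1) / q) ≡ 1 [ZMOD p] := by
  rw [← pow_mul, Nat.mul_div_cancel' hq]
  by_cases hx : (p : ℤ) ∣ x
  · exact .inl (Int.modEq_zero_iff_dvd.2 (dvd_pow hx (Nat.sub_ne_zero_of_lt hp.one_lt)))
  · have hcoprime : IsCoprime x p := ((Nat.prime_iff_prime_int.1 hp).coprime_iff_not_dvd.2 hx).symm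
    exact .inr (Int.ModEq.pow_card_sub_one_eq_one hp hcoprime)

/-- `a` is visibly not a `q`-th power modulo some prime `p` in `ps`: it fails the test
`a ^ ((p - 1) / q) ∈ {0, 1}` modulo `p`. This is meant for primes `p` with `q ∣ p - 1`. -/
def HasPowObstruction (q : ℕ) (ps : List ℕ) (a : ℤ) : Prop :=
  ∃ p ∈ ps, ¬ a ^ ((p - 1) / q) ≡ 0 [ZMOD p] ∧ ¬ a ^ ((p - 1) / q) ≡ 1 [ZMOD p]

instance (q : ℕ) (ps : List ℕ) : DecidablePred (HasPowObstruction q ps) := fun a =>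
  inferInstanceAs (Decidable (∃ p ∈ ps,
    ¬ a ^ ((p - 1) / q) ≡ 0 [ZMOD p] ∧ ¬ a ^ ((p - 1) / q) ≡ 1 [ZMOD p]))

namespace HasPowObstruction

variable {q : ℕ} {ps : List ℕ} {a b : ℤ}

theorem of_modEq (hab : a ≡ b [ZMOD ps.prod]) (ha : HasPowObstruction q ps a) :
    HasPowObstruction q ps b := by
  obtain ⟨p, hp, h0, h1⟩ := ha
  have hpow : a ^ ((p - 1) / q) ≡ b ^ ((p - 1) / q) [ZMOD p] :=
    (hab.of_dvd (Int.natCast_dvd_natCast.2 (List.dvd_prod hp))).pow _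
  exact ⟨p, hp, fun h => h0 (hpow.trans h), fun h => h1 (hpow.trans h)⟩

theorem ne_pow (hps : ∀ p ∈ ps, p.Prime ∧ q ∣ p - 1) (ha : HasPowObstruction q ps a) (x : ℤ) :
    a ≠ x ^ q := by
  rintro rfl
  obtain ⟨p, hp, h0, h1⟩ := ha
  exact (pow_pow_modEq_zero_or_one (hps p hp).1 (hps p hp).2 x).elim h0 h1

end HasPowObstruction

/-- The map `(G n, G (n + 1)) ↦ (G (n + 1), G (n + 2))` of the binary recurrence with parameters
`A` and `B`, modulo `Q`. Only the new term is reduced, the other one being reduced already along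
an orbit of small initial values. -/
def recurrenceStep (A B Q : ℤ) (s : ℤ × ℤ) : ℤ × ℤ :=
  (s.2, (A * s.2 + B * s.1) % Q)

/-- The finite test of the sieve: modulo the product of `ps`, the binary recurrence with parameters
`A`, `B` and initial values `u`, `v` returns to its initial state after `M` steps, and each of its
first `M` terms has an obstruction to being a `q`-th power at a prime of `ps`. The test is a `Bool`
that walks through the orbit before comparing its end points, so that evaluation in the kernel
never has to unfold many steps at once. -/
def powSieve (A B u v : ℤ) (q : ℕ) (ps : List ℕ) (M : ℕ) : Bool :=
  (List.iterate (recurrenceStep A B ps.prod) (u, v) M).all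
      (fun s => decide (HasPowObstruction q ps s.1)) &&
    decide ((recurrenceStep A B ps.prod)^[M] (u, v) = (u, v))

section BinaryRecurrence

variable {A B u v : ℤ} {G : ℕ → ℤ}

theorem iterate_recurrenceStep_modEq (hG0 : G 0 = u) (hG1 : G 1 = v)
    (hG : ∀ n, G (n + 2) = A * G (n + 1) + B * G n) (Q : ℤ) (n : ℕ) :
    ((recurrenceStep A B Q)^[n] (u, v)).1 ≡ G n [ZMOD Q] ∧
      ((recurrenceStep A B Q)^[n] (u, v)).2 ≡ G (n + 1) [ZMOD Q] := by
  induction n with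
  | zero => exact ⟨hG0 ▸ .rfl, hG1 ▸ .rfl⟩
  | succ n ih =>
    rw [Function.iterate_succ_apply', hG]
    exact ⟨ih.2, (Int.mod_modEq _ _).trans ((ih.2.mul_left A).add (ih.1.mul_left B))⟩

theorem hasPowObstruction_iterate_of_powSieve {q M : ℕ} {ps : List ℕ} (hM : 0 < M)
    (hsieve : powSieve A B u v q ps M) (n : ℕ) :
    HasPowObstruction q ps ((recurrenceStep A B ps.prod)^[n] (u, v)).1 := by
  simp only [powSieve, Bool.and_eq_true, List.all_eq_true, decide_eq_true_eq] at hsieve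
  obtain ⟨hobstruction, hperiod⟩ := hsieve
  rw [← Function.IsPeriodicPt.iterate_mod_apply hperiod n]
  exact hobstruction _ (List.mem_iterate.2 ⟨n % M, Nat.mod_lt n hM, rfl⟩)

theorem not_exists_eq_pow_of_powSieve (hG0 : G 0 = u) (hG1 : G 1 = v)
    (hG : ∀ n, G (n + 2) = A * G (n + 1) + B * G n) {q : ℕ} (ps : List ℕ) (M : ℕ) (hM : 0 < M)
    (hps : ∀ p ∈ ps, p.Prime ∧ q ∣ p - 1) (hsieve : powSieve A B u v q ps M) :
    ¬ ∃ (n : ℕ) (x : ℤ), G n = x ^ q := by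
  rintro ⟨n, x, hx⟩
  have hobstruction : HasPowObstruction q ps (G n) :=
    (hasPowObstruction_iterate_of_powSieve hM hsieve n).of_modEq
      (iterate_recurrenceStep_modEq hG0 hG1 hG _ n).1
  exact hobstruction.ne_pow hps x hx

end BinaryRecurrence

/-- The binary recurrence sequence with `G 0 = 3`, `G 1 = 2` and
`G (n+2) = 2 * G (n + 1) + 2 * G n` contains no `q`-th powers for any prime
`q ∈ {3, 5, 7, 11, 13, 17}`. -/
theorem no_powers_A2_B2_u3_v2
    (G : ℕ → ℤ) (hG0 : G 0 = 3) (hG1 : G 1 = 2)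
    (hGrec : ∀ n : ℕ, G (n + 2) = 2 * G (n + 1) + 2 * G n) :
    ∀ q ∈ ({3, 5, 7, 11, 13, 17} : Finset ℕ), Nat.Prime q →
      ¬ ∃ (n : ℕ) (x : ℤ), G n = x ^ q := by
  intro q hq _
  simp only [Finset.mem_insert, Finset.mem_singleton] at hq
  -- The primes were found by a search; the number after them is the period modulo their product.
  rcases hq with rfl | rfl | rfl | rfl | rfl | rfl
  · exact not_exists_eq_pow_of_powSieve hG0 hG1 hGrec [13] 4
      (by norm_num) (by norm_num) (by decide +kernel)
  · exact not_exists_eq_pow_of_powSieve hG0 hG1 hGrec [11, 61, 241] 240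
      (by norm_num) (by norm_num) (by decide +kernel)
  · exact not_exists_eq_pow_of_powSieve hG0 hG1 hGrec [71] 70
      (by norm_num) (by norm_num) (by decide +kernel)
  · exact not_exists_eq_pow_of_powSieve hG0 hG1 hGrec [23, 661, 1321, 3301] 3300
      (by norm_num) (by norm_num) (by decide +kernel)
  · exact not_exists_eq_pow_of_powSieve hG0 hG1 hGrec [157, 313] 312
      (by norm_num) (by norm_num) (by decide +kernel)
  · exact not_exists_eq_pow_of_powSieve hG0 hG1 hGrec [409, 613] 612
      (by norm_num) (by norm_num) (by decide +kernel)
end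

section
/- Let G be the binary recurrence sequence with parameters A = 3, B = 1 and initial values G_0 = 2, G_1 = 3 (so G_{n+2} = 3·G_{n+1} + G_n). Then for every prime q ∈ {3, 5, 7, 11, 13, 17}, the sequence contains no q-th powers: there are no n ≥ 0 and x ∈ ℤ with G_n = x^q. -/
/-!
If `p` is a prime with `q ∣ p - 1`, then by Fermat every `q`-th power prime to `p` has
`(p - 1) / q`-th power `1` modulo `p`. Modulo `p` the sequence is periodic, so this condition on
`G n` excludes whole residue classes of `n` modulo the period. For each `q` one or two primes
suffice to exclude all of them; for instance, modulo `13` the sequence cycles through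
`2, 3, 11, 10`, while the cubes are `0, 1, 5, 8, 12`.
-/

open Function

theorem eq_of_second_order_rec {α : Type*} {F : α → α → α} {f g : ℕ → α}
    (hf : ∀ n, f (n + 2) = F (f (n + 1)) (f n)) (hg : ∀ n, g (n + 2) = F (g (n + 1)) (g n))
    (h0 : f 0 = g 0) (h1 : f 1 = g 1) : f = g := by
  funext n
  induction n using Nat.twoStepInduction with
  | zero => exact h0
  | one => exact h1
  | more n ih ih' => rw [hf, hg, ih, ih']

theorem periodic_of_second_order_rec {α : Type*} {F : α → α → α} {f : ℕ → α} {N : ℕ}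
    (hf : ∀ n, f (n + 2) = F (f (n + 1)) (f n)) (h0 : f N = f 0) (h1 : f (N + 1) = f 1) :
    Periodic f N := by
  have hshift : ∀ n, f (n + 2 + N) = F (f (n + 1 + N)) (f (n + N)) := fun n => by
    rw [Nat.add_right_comm n 2, hf, Nat.add_right_comm n 1]
  exact congrFun <| eq_of_second_order_rec hshift hf (by rwa [zero_add]) (by rwa [add_comm])

theorem pow_pow_div_modEq_one {p q : ℕ} (hp : p.Prime) (hq : q ∣ p - 1) {x : ℤ}
    (hx : ¬ (p : ℤ) ∣ x ^ q) : (x ^ q) ^ ((p - 1) / q) ≡ 1 [ZMOD p] := by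
  have hq0 : q ≠ 0 := ne_zero_of_dvd_ne_zero (Nat.sub_ne_zero_of_lt hp.one_lt) hq
  have hcop : IsCoprime x p :=
    ((Nat.prime_iff_prime_int.mp hp).coprime_iff_not_dvd.mpr
      fun hpx => hx (dvd_pow hpx hq0)).symm
  rw [← pow_mul, Nat.mul_div_cancel' hq]
  exact Int.ModEq.pow_card_sub_one_eq_one hp hcop

/-- The binary recurrence sequence with parameters `A`, `B` and initial values `u`, `v`.
It is defined by shifting the initial values, so that evaluating the `n`-th term takes `n` steps. -/
def binRec (A B u v : ℤ) : ℕ → ℤ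
  | 0 => u
  | n + 1 => binRec A B v (A * v + B * u) n

theorem binRec_add_two (A B u v : ℤ) (n : ℕ) :
    binRec A B u v (n + 2) = A * binRec A B u v (n + 1) + B * binRec A B u v n := by
  induction n generalizing u v with
  | zero => rfl
  | succ _ ih => exact ih v (A * v + B * u)

theorem binRec_mod_modEq {A B u v m : ℤ} {N : ℕ} (h0 : binRec A B u v N ≡ u [ZMOD m])
    (h1 : binRec A B u v (N + 1) ≡ v [ZMOD m]) (n : ℕ) :
    binRec A B u v (n % N) ≡ binRec A B u v n [ZMOD m] := by
  have hrec : ∀ n, binRec A B u v (n + 2) % m =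
      (A * (binRec A B u v (n + 1) % m) + B * (binRec A B u v n % m)) % m := fun n => by
    rw [binRec_add_two]
    exact ((Int.mod_modEq _ _).symm.mul_left A).add ((Int.mod_modEq _ _).symm.mul_left B)
  have hperiodic : Periodic (fun n => binRec A B u v n % m) N :=
    periodic_of_second_order_rec (F := fun a b => (A * a + B * b) % m) hrec h0 h1
  exact hperiodic.map_mod_nat n

/-- A certificate that `binRec A B u v` contains no `q`-th power: `N` is a common period of the
sequence modulo the primes in `P`, and for each index `r < N` some `p ∈ P` witnesses, through
Fermat's little theorem, that no term congruent to the `r`-th one modulo `p` is a `q`-th power. -/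
structure IsPowerSieve_s18 (A B u v : ℤ) (q N : ℕ) (P : List ℕ) : Prop where
  pos : 0 < N
  prime : ∀ p ∈ P, p.Prime
  dvd : ∀ p ∈ P, q ∣ p - 1
  period : ∀ p ∈ P, binRec A B u v N ≡ u [ZMOD p] ∧ binRec A B u v (N + 1) ≡ v [ZMOD p]
  excludes : ∀ r < N, ∃ p ∈ P, ¬ (p : ℤ) ∣ binRec A B u v r ∧
    ¬ binRec A B u v r ^ ((p - 1) / q) ≡ 1 [ZMOD p]

theorem IsPowerSieve_s18.binRec_ne_pow {A B u v : ℤ} {q N : ℕ} {P : List ℕ}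
    (hP : IsPowerSieve_s18 A B u v q N P) (n : ℕ) (x : ℤ) : binRec A B u v n ≠ x ^ q := by
  intro hn
  obtain ⟨p, hpP, hndvd, hnone⟩ := hP.excludes (n % N) (Nat.mod_lt n hP.pos)
  have hmod : binRec A B u v (n % N) ≡ x ^ q [ZMOD p] :=
    hn ▸ binRec_mod_modEq (hP.period p hpP).1 (hP.period p hpP).2 n
  have hx : ¬ (p : ℤ) ∣ x ^ q := hmod.dvd_iff.not.mp hndvd
  exact hnone <| (hmod.pow _).trans <| pow_pow_div_modEq_one (hP.prime p hpP) (hP.dvd p hpP) hx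

theorem exists_isPowerSieve {q : ℕ} (hq : q ∈ ({3, 5, 7, 11, 13, 17} : Finset ℕ)) :
    ∃ N P, IsPowerSieve_s18 3 1 2 3 q N P := by
  simp only [Finset.mem_insert, Finset.mem_singleton] at hq
  rcases hq with rfl | rfl | rfl | rfl | rfl | rfl <;>
    [refine ⟨4, [13], ?_⟩; refine ⟨40, [11, 131], ?_⟩; refine ⟨28, [29], ?_⟩;
      refine ⟨176, [23, 33617], ?_⟩; refine ⟨52, [53, 118717], ?_⟩; refine ⟨92, [137], ?_⟩] <;>
  exact {
    pos := by simp
    prime := by norm_num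
    dvd := by norm_num
    period := by decide +kernel
    excludes := by decide +kernel }

/-- The binary recurrence sequence with `G 0 = 2`, `G 1 = 3` and
`G (n+2) = 3 * G (n + 1) + G n` contains no `q`-th powers for any prime
`q ∈ {3, 5, 7, 11, 13, 17}`. -/
theorem no_powers_A3_B1_u2_v3
    (G : ℕ → ℤ) (hG0 : G 0 = 2) (hG1 : G 1 = 3)
    (hGrec : ∀ n : ℕ, G (n + 2) = 3 * G (n + 1) + G n) :
    ∀ q ∈ ({3, 5, 7, 11, 13, 17} : Finset ℕ), Nat.Prime q →
      ¬ ∃ (n : ℕ) (x : ℤ), G n = x ^ q := by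
  rintro q hq - ⟨n, x, hx⟩
  obtain ⟨N, P, hP⟩ := exists_isPowerSieve hq
  have hG : G = binRec 3 1 2 3 :=
    eq_of_second_order_rec (F := fun a b => 3 * a + 1 * b) (by simpa using hGrec)
      (binRec_add_two 3 1 2 3) hG0 hG1
  exact hP.binRec_ne_pow n x (hG ▸ hx)
end

section
/- Let G be the binary recurrence sequence with parameters A = 1, B = 1 and initial values G_0 = 1, G_1 = 3 (so G_{n+2} = G_{n+1} + G_n; the sequence begins 1, 3, 4, 7, 11, 18, ...). Then the equation G_n = 5·x³ has no solutions: there are no n ≥ 0 and x ∈ ℤ with G_n = 5·x³. -/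
/-!
Modulo `5` the characteristic polynomial `X² - X - 1` has the root `3`, and the initial values
`1, 3` are those of the geometric solution `3ⁿ`. Hence `G n ≡ 3ⁿ (mod 5)`, so `5 ∤ G n`.
-/

section BinaryRecurrence

variable {R : Type*} [CommRing R] {A B r m p : R} {G : ℕ → R}

theorem dvd_sub_mul_pow_of_binary_recurrence (hrec : ∀ n, G (n + 2) = A * G (n + 1) + B * G n)
    (hr : m ∣ r ^ 2 - (A * r + B)) (hinit : m ∣ G 1 - r * G 0) (n : ℕ) :
    m ∣ G n - G 0 * r ^ n := by
  induction n using Nat.twoStepInduction with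
  | zero => simp
  | one => simpa [mul_comm] using hinit
  | more n ih_n ih_succ =>
    have hcomb : G (n + 2) - G 0 * r ^ (n + 2) =
        A * (G (n + 1) - G 0 * r ^ (n + 1)) + B * (G n - G 0 * r ^ n)
          - G 0 * r ^ n * (r ^ 2 - (A * r + B)) := by
      rw [hrec]
      ring
    rw [hcomb]
    exact ((ih_succ.mul_left A).add (ih_n.mul_left B)).sub (hr.mul_left _)

theorem not_dvd_of_binary_recurrence_of_prime (hp : Prime p)
    (hrec : ∀ n, G (n + 2) = A * G (n + 1) + B * G n) (hr : p ∣ r ^ 2 - (A * r + B))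
    (hinit : p ∣ G 1 - r * G 0) (hpr : ¬ p ∣ r) (hp0 : ¬ p ∣ G 0) (n : ℕ) : ¬ p ∣ G n := by
  rw [dvd_iff_dvd_of_dvd_sub (dvd_sub_mul_pow_of_binary_recurrence hrec hr hinit n)]
  exact hp.not_dvd_mul hp0 (mt hp.dvd_of_dvd_pow hpr)

end BinaryRecurrence

theorem no_five_times_cube_A1_B1_u1_v3_general {G : ℕ → ℤ} (hG0 : ¬ 5 ∣ G 0)
    (hG1 : 5 ∣ G 1 - 3 * G 0) (hGrec : ∀ n, G (n + 2) = G (n + 1) + G n) (n : ℕ) :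
    ¬ 5 ∣ G n := by
  have hrec : ∀ n, G (n + 2) = 1 * G (n + 1) + 1 * G n := by simpa only [one_mul] using hGrec
  have prime_five : Prime (5 : ℤ) := by norm_num
  have three_root : (5 : ℤ) ∣ 3 ^ 2 - (1 * 3 + 1) := by norm_num
  exact not_dvd_of_binary_recurrence_of_prime prime_five hrec three_root hG1 (by norm_num) hG0 n

/-- The binary recurrence sequence with `G 0 = 1`, `G 1 = 3` and
`G (n+2) = G (n+1) + G n` (beginning `1, 3, 4, 7, 11, 18, ...`) contains no term of
the form `5·x³`. -/
theorem no_five_times_cube_A1_B1_u1_v3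
    (G : ℕ → ℤ) (hG0 : G 0 = 1) (hG1 : G 1 = 3)
    (hGrec : ∀ n : ℕ, G (n + 2) = G (n + 1) + G n) :
    ¬ ∃ (n : ℕ) (x : ℤ), G n = 5 * x ^ 3 := by
  rintro ⟨n, x, hx⟩
  exact no_five_times_cube_A1_B1_u1_v3_general (by simp [hG0]) (by simp [hG0, hG1]) hGrec n
    ⟨x ^ 3, hx⟩
end
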